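/- arXiv:2202.10383 — 2 statements merged into one kernel-verified Lean document; each statement's English description precedes it below -/
import Mathlib

section
/- For every metaformula Φ and all variable metavariables x and y, the hypothesis-free scheme with conclusion ∀x∀y Φ → ∀y∀x Φ and DV conditions consisting exactly of the pairs {y, m} for every m in ({x} ∪ OC(Φ)) ∖ {y}, is provable from the subsystem T. -/
set_option autoImplicit false

/-! ## Megill-style scheme-level formalization of first-order logic -/

/-- Metavariables: variable metavariables `vr i` (standing for x_i) and
formula metavariables `fm i` (standing for φ_i). -/
inductive MV : Type
  | vr (i : ℕ) : MV
  | fm (i : ℕ) : MV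
  deriving DecidableEq

/-- Metaformulas over the pure language of equality. -/
inductive MF : Type
  | phi (i : ℕ) : MF
  | eq (i j : ℕ) : MF
  | imp (a b : MF) : MF
  | not (a : MF) : MF
  | all (i : ℕ) (a : MF) : MF
  deriving DecidableEq

/-- The set of metavariables occurring in a metaformula. -/
def MF.OC : MF → Set MV
  | .phi i => {MV.fm i}
  | .eq i j => {MV.vr i, MV.vr j}
  | .imp a b => a.OC ∪ b.OC
  | .not a => a.OC
  | .all i a => insert (MV.vr i) a.OC

/-- A scheme: finitely many hypotheses, a conclusion, and disjoint-variable
(DV) conditions given as unordered pairs of metavariables. -/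
structure Scheme : Type where
  hyps : Finset MF
  concl : MF
  dv : Set (Sym2 MV)

/-- Metavariables occurring in a scheme (in its hypotheses or conclusion). -/
def Scheme.OC (Φ : Scheme) : Set MV :=
  {m | ∃ h ∈ Φ.hyps, m ∈ h.OC} ∪ Φ.concl.OC

/-- A (type-preserving) substitution: variable metavariables go to variable
metavariables, formula metavariables go to metaformulas; it is the identity
outside a finite set. -/
structure Subst : Type where
  vr : ℕ → ℕ
  fm : ℕ → MF
  finVr : {i : ℕ | vr i ≠ i}.Finite
  finFm : {i : ℕ | fm i ≠ MF.phi i}.Finite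

/-- Action of a substitution on a metaformula. -/
def MF.substMF (σ : Subst) : MF → MF
  | .phi i => σ.fm i
  | .eq i j => .eq (σ.vr i) (σ.vr j)
  | .imp a b => .imp (a.substMF σ) (b.substMF σ)
  | .not a => .not (a.substMF σ)
  | .all i a => .all (σ.vr i) (a.substMF σ)

/-- The set of metavariables occurring in the image of a metavariable. -/
def Subst.appMV (σ : Subst) : MV → Set MV
  | .vr i => {MV.vr (σ.vr i)}
  | .fm i => (σ.fm i).OC

/-- σ is the identity on a given metavariable. -/
def Subst.Fixes (σ : Subst) : MV → Prop
  | .vr i => σ.vr i = i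
  | .fm i => σ.fm i = MF.phi i

/-- A substitution is legitimate on a scheme if it does not violate its
DV conditions. -/
def Subst.Legit (σ : Subst) (Φ : Scheme) : Prop :=
  ∀ m n : MV, s(m, n) ∈ Φ.dv → σ.appMV m ∩ σ.appMV n = ∅

/-- Propagation of DV conditions along a substitution. -/
def Subst.dvMap (σ : Subst) (D : Set (Sym2 MV)) : Set (Sym2 MV) :=
  {q | ∃ m' n' m n : MV, s(m', n') ∈ D ∧ m ∈ σ.appMV m' ∧ n ∈ σ.appMV n' ∧ q = s(m, n)}

/-- Action of a substitution on a scheme. -/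
def Scheme.substS (Φ : Scheme) (σ : Subst) : Scheme :=
  ⟨Φ.hyps.image (MF.substMF σ), Φ.concl.substMF σ, σ.dvMap Φ.dv⟩

/-- `Φ.Inst Ψ` : Ψ is an instance of Φ, i.e. the result of a legitimate
substitution, possibly followed by the addition of DV conditions. -/
def Scheme.Inst (Φ Ψ : Scheme) : Prop :=
  ∃ σ : Subst, σ.Legit Φ ∧ Ψ.hyps = Φ.hyps.image (MF.substMF σ) ∧
    Ψ.concl = Φ.concl.substMF σ ∧ σ.dvMap Φ.dv ⊆ Ψ.dv

/-- Metavariables occurring in a list of metaformulas. -/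
def listOC (P : List MF) : Set MV := {m | ∃ f ∈ P, m ∈ f.OC}

/-- The DV conditions of a proof `P` of the scheme `Φ`: those of `Φ`, plus all
pairs {m, n} where m is a dummy metavariable of `P` and n occurs in `P`. -/
def proofDV (Φ : Scheme) (P : List MF) : Set (Sym2 MV) :=
  Φ.dv ∪ {q | ∃ m n : MV, m ∈ listOC P ∧ m ∉ Φ.OC ∧ n ∈ listOC P ∧ q = s(m, n)}

/-- `P` is a proof of the scheme `Φ` from the set `S` of schemes. -/
def IsProof (S : Set Scheme) (Φ : Scheme) (P : List MF) : Prop :=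
  P ≠ [] ∧ P.getLast? = some Φ.concl ∧
  ∀ (k : ℕ) (hk : k < P.length),
    P.get ⟨k, hk⟩ ∈ Φ.hyps ∨
    ∃ hs : Finset MF,
      (∀ h ∈ hs, ∃ (l : ℕ) (hl : l < k), P.get ⟨l, hl.trans hk⟩ = h) ∧
      ∃ Ξ ∈ S, Ξ.Inst ⟨hs, P.get ⟨k, hk⟩, proofDV Φ P⟩

/-- `S ⊢ Φ` : the scheme `Φ` is provable from the set `S` of schemes. -/
def Provable (S : Set Scheme) (Φ : Scheme) : Prop := ∃ P : List MF, IsProof S Φ P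

/-! ## Object level: first-order formulas and semantics -/

/-- First-order formulas over the pure language of equality, with
individual variables v_i. -/
inductive FM : Type
  | eq (i j : ℕ) : FM
  | imp (a b : FM) : FM
  | not (a : FM) : FM
  | all (i : ℕ) (a : FM) : FM
  deriving DecidableEq

/-- Variables occurring in a first-order formula. -/
def FM.vars : FM → Set ℕ
  | .eq i j => {i, j}
  | .imp a b => a.vars ∪ b.vars
  | .not a => a.vars
  | .all i a => insert i a.vars

/-- An object-substitution: variable metavariables go to individual variables,
formula metavariables go to first-order formulas. -/
structure OSubst : Type where
  vr : ℕ → ℕ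
  fm : ℕ → FM

/-- Action of an object-substitution on a metaformula, yielding a first-order
formula (an object-instance). -/
def MF.osubst (τ : OSubst) : MF → FM
  | .phi i => τ.fm i
  | .eq i j => .eq (τ.vr i) (τ.vr j)
  | .imp a b => .imp (a.osubst τ) (b.osubst τ)
  | .not a => .not (a.osubst τ)
  | .all i a => .all (τ.vr i) (a.osubst τ)

/-- Variables occurring in the image of a metavariable. -/
def OSubst.appVars (τ : OSubst) : MV → Set ℕ
  | .vr i => {τ.vr i}
  | .fm i => (τ.fm i).vars

/-- An object-substitution is legitimate on a scheme if images of DV-paired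
metavariables share no variables. -/
def OSubst.Legit (τ : OSubst) (Φ : Scheme) : Prop :=
  ∀ m n : MV, s(m, n) ∈ Φ.dv → τ.appVars m ∩ τ.appVars n = ∅

/-- Evaluation of a first-order formula in a structure with domain `D`
(equality interpreted as equality) under an assignment `ρ`. -/
def FM.eval {D : Type} (ρ : ℕ → D) : FM → Prop
  | .eq i j => ρ i = ρ j
  | .imp a b => a.eval ρ → b.eval ρ
  | .not a => ¬ a.eval ρ
  | .all i a => ∀ d : D, a.eval (Function.update ρ i d)

/-- Validity of a first-order formula in the structure with domain `D`. -/
def FM.Valid (D : Type) (f : FM) : Prop := ∀ ρ : ℕ → D, f.eval ρ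

/-- A scheme is true if for every legitimate object-instance and every
nonempty domain, the conclusion is valid whenever all hypotheses are. -/
def Scheme.IsTrue (Φ : Scheme) : Prop :=
  ∀ τ : OSubst, τ.Legit Φ →
    ∀ D : Type, Nonempty D →
      (∀ h ∈ Φ.hyps, FM.Valid D (h.osubst τ)) → FM.Valid D (Φ.concl.osubst τ)

/-! ## (i,j)-transforms and supertruth -/

/-- Auxiliary: (i,j)-transform with a flag recording whether we are inside the
scope of a quantifier ∀x_i. -/
def MF.transfAux (i j : ℕ) : MF → Bool → MF
  | .phi k, _ => .phi k
  | .eq a b, ins =>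
      .eq (if ins = true ∧ a = j then i else a) (if ins = true ∧ b = j then i else b)
  | .imp a b, ins => .imp (a.transfAux i j ins) (b.transfAux i j ins)
  | .not a, ins => .not (a.transfAux i j ins)
  | .all k a, ins =>
      .all (if ins = true ∧ k = j then i else k) (a.transfAux i j (ins || decide (k = i)))

/-- The (i,j)-transform of a metaformula: replace every occurrence of x_j
lying within the scope of a quantifier ∀x_i by x_i. -/
def MF.transform (i j : ℕ) (f : MF) : MF := f.transfAux i j false

/-- The (i,j)-transform of a scheme: transform hypotheses and conclusion,
keep the DV conditions. -/
def Scheme.transform (i j : ℕ) (Φ : Scheme) : Scheme :=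
  ⟨Φ.hyps.image (MF.transform i j), Φ.concl.transform i j, Φ.dv⟩

/-- The (i,j)-transform (and the {i,j}-transform) is legitimate on a scheme
if {x_i, x_j} is not among its DV conditions. -/
def Scheme.TLegit (i j : ℕ) (Φ : Scheme) : Prop := s(MV.vr i, MV.vr j) ∉ Φ.dv

/-- A (hypothesis-free) scheme is presupertrue if all the legitimate
(i,j)-transforms of all its instances (including itself) are true. -/
def Scheme.PreST (Φ : Scheme) : Prop :=
  ∀ Ψ : Scheme, (Ψ = Φ ∨ Φ.Inst Ψ) → ∀ i j : ℕ, Ψ.TLegit i j → (Ψ.transform i j).IsTrue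

/-- A scheme is supertrue if every instance of it (including itself) satisfies:
whenever all legitimate (i,j)-transforms of all instances of each of its
hypotheses (taken as hypothesis-free schemes with the inherited DV conditions)
are true, all legitimate (i,j)-transforms of all instances of its conclusion
are true. -/
def Scheme.Supertrue (Φ : Scheme) : Prop :=
  ∀ Ψ : Scheme, (Ψ = Φ ∨ Φ.Inst Ψ) →
    (∀ h ∈ Ψ.hyps, Scheme.PreST ⟨∅, h, Ψ.dv⟩) → Scheme.PreST ⟨∅, Ψ.concl, Ψ.dv⟩

/-- The {i,j}-transform of a metaformula: the composite of the (i,j)-transform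
and the (j,i)-transform, the one with smaller first index performed first. -/
def MF.stransform (i j : ℕ) (f : MF) : MF :=
  if i ≤ j then (f.transform i j).transform j i else (f.transform j i).transform i j

/-- The {i,j}-transform of a scheme. -/
def Scheme.stransform (i j : ℕ) (Φ : Scheme) : Scheme :=
  ⟨Φ.hyps.image (MF.stransform i j), Φ.concl.stransform i j, Φ.dv⟩

/-- A metaformula contains no formula metavariables. -/
def MF.FmFree : MF → Prop
  | .phi _ => False
  | .eq _ _ => True
  | .imp a b => a.FmFree ∧ b.FmFree
  | .not a => a.FmFree
  | .all _ a => a.FmFree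

/-- A scheme contains no formula metavariables. -/
def Scheme.FmFree (Φ : Scheme) : Prop := (∀ h ∈ Φ.hyps, h.FmFree) ∧ Φ.concl.FmFree

/-- A (hypothesis-free) scheme is pre-semisupertrue if all the legitimate
{i,j}-transforms of all its instances (including itself) are true. -/
def Scheme.PreSST (Φ : Scheme) : Prop :=
  ∀ Ψ : Scheme, (Ψ = Φ ∨ Φ.Inst Ψ) → ∀ i j : ℕ, Ψ.TLegit i j → (Ψ.stransform i j).IsTrue

/-- A scheme is semisupertrue if it is true and every formula-metavariable-free
instance of it satisfies: whenever all legitimate {i,j}-transforms of all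
instances of each of its hypotheses are true, all legitimate {i,j}-transforms
of all instances of its conclusion are true. -/
def Scheme.Semisupertrue (Φ : Scheme) : Prop :=
  Φ.IsTrue ∧
  ∀ Ψ : Scheme, (Ψ = Φ ∨ Φ.Inst Ψ) → Ψ.FmFree →
    (∀ h ∈ Ψ.hyps, Scheme.PreSST ⟨∅, h, Ψ.dv⟩) → Scheme.PreSST ⟨∅, Ψ.concl, Ψ.dv⟩

/-- A metaformula is quantifier-free. -/
def MF.QFree : MF → Prop
  | .phi _ => True
  | .eq _ _ => True
  | .imp a b => a.QFree ∧ b.QFree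
  | .not a => a.QFree
  | .all _ _ => False

/-- A scheme is quantifier-free. -/
def Scheme.QFree (Φ : Scheme) : Prop := (∀ h ∈ Φ.hyps, h.QFree) ∧ Φ.concl.QFree

/-! ## The axiom schemes of the system TMM
(x = x_0, y = x_1, z = x_2; φ = φ_0, ψ = φ_1, χ = φ_2, θ = φ_3, τ = φ_4) -/

def ax_mp : Scheme := ⟨{.phi 0, .imp (.phi 0) (.phi 1)}, .phi 1, ∅⟩

def ax_minimp : Scheme :=
  ⟨∅, .imp (.phi 0) (.imp (.imp (.phi 1) (.phi 2))
      (.imp (.imp (.imp (.phi 3) (.phi 1)) (.imp (.phi 2) (.phi 4)))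
        (.imp (.phi 1) (.phi 4)))), ∅⟩

def ax_peirce : Scheme := ⟨∅, .imp (.imp (.imp (.phi 0) (.phi 1)) (.phi 0)) (.phi 0), ∅⟩

def ax_contrap : Scheme :=
  ⟨∅, .imp (.imp (.phi 0) (.not (.phi 1))) (.imp (.phi 1) (.not (.phi 0))), ∅⟩

def ax_notelim : Scheme := ⟨∅, .imp (.not (.phi 0)) (.imp (.phi 0) (.phi 1)), ∅⟩

def ax_gen : Scheme := ⟨{.phi 0}, .all 0 (.phi 0), ∅⟩

def ax_ALLdistr : Scheme :=
  ⟨∅, .imp (.all 0 (.imp (.phi 0) (.phi 1))) (.imp (.all 0 (.phi 0)) (.all 0 (.phi 1))), ∅⟩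

def ax_spec : Scheme := ⟨∅, .imp (.all 0 (.phi 0)) (.phi 0), ∅⟩

def ax_modal5 : Scheme :=
  ⟨∅, .imp (.not (.all 0 (.phi 0))) (.all 0 (.not (.all 0 (.phi 0)))), ∅⟩

def ax_vacGen : Scheme := ⟨∅, .imp (.phi 0) (.all 0 (.phi 0)), {s(MV.vr 0, MV.fm 0)}⟩

def ax_ALLcomm : Scheme :=
  ⟨∅, .imp (.all 0 (.all 1 (.phi 0))) (.all 1 (.all 0 (.phi 0))), ∅⟩

def ax_EQrefl : Scheme := ⟨∅, .eq 0 0, ∅⟩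

def ax_EQsymm : Scheme := ⟨∅, .imp (.eq 0 1) (.eq 1 0), ∅⟩

def ax_EQtrans : Scheme := ⟨∅, .imp (.eq 0 1) (.imp (.eq 1 2) (.eq 0 2)), ∅⟩

def ax_denot : Scheme :=
  ⟨∅, .imp (.eq 0 0) (.not (.all 1 (.not (.eq 1 0)))), {s(MV.vr 0, MV.vr 1)}⟩

def ax_subst : Scheme :=
  ⟨∅, .all 0 (.imp (.eq 0 1) (.imp (.phi 0) (.all 0 (.imp (.eq 0 1) (.phi 0))))),
    {s(MV.vr 0, MV.vr 1), s(MV.vr 1, MV.fm 0)}⟩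

def ax_ALLeq : Scheme :=
  ⟨∅, .imp (.all 0 (.eq 0 1)) (.imp (.all 0 (.phi 0)) (.all 1 (.phi 0))), ∅⟩

def ax_genEq : Scheme :=
  ⟨∅, .imp (.not (.all 0 (.eq 0 1)))
      (.imp (.not (.all 0 (.eq 0 2))) (.imp (.eq 1 2) (.all 0 (.eq 1 2)))), ∅⟩

def ax_modalD : Scheme := ⟨∅, .imp (.all 0 (.not (.phi 0))) (.not (.all 0 (.phi 0))), ∅⟩

def ax_modal4 : Scheme := ⟨∅, .imp (.all 0 (.phi 0)) (.all 0 (.all 0 (.phi 0))), ∅⟩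

/-- The system TMM. -/
def TMM : Set Scheme :=
  {ax_mp, ax_minimp, ax_peirce, ax_contrap, ax_notelim, ax_gen, ax_ALLdistr, ax_spec,
   ax_modal5, ax_vacGen, ax_ALLcomm, ax_EQrefl, ax_EQsymm, ax_EQtrans, ax_denot,
   ax_subst, ax_ALLeq, ax_genEq}

/-- The subsystem T. -/
def Tsys : Set Scheme :=
  {ax_mp, ax_minimp, ax_peirce, ax_contrap, ax_notelim, ax_gen, ax_ALLdistr, ax_vacGen,
   ax_EQrefl, ax_EQsymm, ax_EQtrans, ax_denot}

/-! The quantifiers commute because bound variables can be renamed. Let `z` be a dummy variable and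
let `Φ'` be `Φ` with every occurrence of `y`, bound ones included, replaced by `z`. Under the
hypothesis `y ≡ z` the metaformulas `Φ` and `Φ'` are equivalent, and `y` no longer occurs in `Φ'`.
Since some `y` equals `z` (`denot`), this gives `∀y Φ → Φ'`, hence `∀x∀y Φ → ∀x Φ'`; vacuous
generalization over `z` followed by renaming `z` back to `y` yields `∀z∀x Φ'` and then `∀y∀x Φ`.
`T` lacks specialization, but here a quantifier over `y` is only ever dropped in passing from `Φ` to
`Φ'`, in which `y` does not occur. -/

local infixr:60 " ⇒ " => MF.imp
local prefix:max "∼" => MF.not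

variable {S : Set Scheme} {D : Set (Sym2 MV)}

/-- Two metavariables are distinct and subject to a disjoint-variable condition in `D`. -/
def DVDistinct (D : Set (Sym2 MV)) (m n : MV) : Prop := m ≠ n ∧ s(m, n) ∈ D

theorem DVDistinct.symm {m n : MV} (h : DVDistinct D m n) : DVDistinct D n m :=
  ⟨h.1.symm, Sym2.eq_swap (a := m) ▸ h.2⟩

/-- The variable metavariable `v` is distinct from, and under a disjoint-variable condition with,
every metavariable occurring in `F`. In particular it does not occur in `F`, even bound. -/
def DVFresh (D : Set (Sym2 MV)) (v : ℕ) (F : MF) : Prop :=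
  ∀ m ∈ F.OC, DVDistinct D (.vr v) m

theorem dvFresh_eq {v i j : ℕ} :
    DVFresh D v (.eq i j) ↔ DVDistinct D (.vr v) (.vr i) ∧ DVDistinct D (.vr v) (.vr j) := by
  simp [DVFresh, MF.OC]

theorem dvFresh_imp {v : ℕ} {F G : MF} :
    DVFresh D v (F ⇒ G) ↔ DVFresh D v F ∧ DVFresh D v G := by
  simp [DVFresh, MF.OC, or_imp, forall_and]

theorem dvFresh_all {v u : ℕ} {F : MF} :
    DVFresh D v (.all u F) ↔ DVDistinct D (.vr v) (.vr u) ∧ DVFresh D v F := by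
  simp [DVFresh, MF.OC]

theorem MF.finite_OC (F : MF) : F.OC.Finite := by
  induction F with
  | phi => exact Set.finite_singleton _
  | eq => exact (Set.finite_singleton _).insert _
  | imp _ _ iha ihb => exact iha.union ihb
  | not _ ih => exact ih
  | all _ _ ih => exact ih.insert _

theorem MF.exists_vr_notMem_OC (F : MF) : ∃ z, MV.vr z ∉ F.OC :=
  (F.finite_OC.preimage fun _ _ _ _ h => MV.vr.inj h).exists_notMem

theorem MF.mem_OC_substMF {σ : Subst} {F : MF} {m : MV} :
    m ∈ (F.substMF σ).OC ↔ ∃ n ∈ F.OC, m ∈ σ.appMV n := by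
  induction F <;>
    simp_all [MF.substMF, MF.OC, Subst.appMV, or_and_right, exists_or]

/-! ### Instances and derivability -/

/-- The substitution sending the first variable and formula metavariables to the entries of the
two lists and fixing all the others. -/
def Subst.ofLists (vs : List ℕ) (Fs : List MF) : Subst where
  vr i := vs.getD i i
  fm i := Fs.getD i (.phi i)
  finVr := (Set.finite_Iio vs.length).subset fun i hi => by
    by_contra h
    exact hi (List.getD_eq_default _ _ (not_lt.1 h))
  finFm := (Set.finite_Iio Fs.length).subset fun i hi => by
    by_contra h
    exact hi (List.getD_eq_default _ _ (not_lt.1 h))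

theorem Scheme.inst_of_dvDistinct {Ξ : Scheme} (σ : Subst)
    (h : ∀ m n, s(m, n) ∈ Ξ.dv → ∀ m' ∈ σ.appMV m, ∀ n' ∈ σ.appMV n, DVDistinct D m' n') :
    Ξ.Inst ⟨Ξ.hyps.image (MF.substMF σ), Ξ.concl.substMF σ, D⟩ := by
  refine ⟨σ, fun m n hmn => ?_, rfl, rfl, ?_⟩
  · exact Set.disjoint_iff_inter_eq_empty.1
      (Set.disjoint_left.2 fun k hk hk' => (h m n hmn k hk k hk').1 rfl)
  · rintro _ ⟨m, n, m', n', hmn, hm, hn, rfl⟩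
    exact (h m n hmn m' hm n' hn).2

theorem Scheme.Inst.mono {Ξ : Scheme} {hs : Finset MF} {F : MF} {E : Set (Sym2 MV)} (hDE : D ⊆ E)
    (h : Ξ.Inst ⟨hs, F, D⟩) : Ξ.Inst ⟨hs, F, E⟩ :=
  let ⟨σ, hσ, hhyps, hconcl, hdv⟩ := h
  ⟨σ, hσ, hhyps, hconcl, hdv.trans hDE⟩

/-- Hypothesis-free derivability from the schemes `S` with a fixed set `D` of disjoint-variable
conditions. Unlike in `Provable`, `D` is independent of the metavariables occurring in the
derivation, which is a tree rather than a list. -/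
inductive Derivable (S : Set Scheme) (D : Set (Sym2 MV)) : MF → Prop
  | inst {Ξ : Scheme} {hs : Finset MF} {F : MF} (hΞ : Ξ ∈ S) (hinst : Ξ.Inst ⟨hs, F, D⟩)
      (hhs : ∀ h ∈ hs, Derivable S D h) : Derivable S D F

theorem Derivable.of_mem {Ξ : Scheme} (hΞ : Ξ ∈ S) (σ : Subst)
    (hdv : ∀ m n, s(m, n) ∈ Ξ.dv → ∀ m' ∈ σ.appMV m, ∀ n' ∈ σ.appMV n, DVDistinct D m' n')
    (hhyps : ∀ h ∈ Ξ.hyps, Derivable S D (h.substMF σ)) : Derivable S D (Ξ.concl.substMF σ) :=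
  .inst hΞ (Scheme.inst_of_dvDistinct σ hdv) (Finset.forall_mem_image.2 hhyps)

/-! ### From derivability to provability -/

/-- A list of metaformulas in which every entry follows from earlier ones by an instance, with
disjoint-variable conditions `D`, of a scheme of `S`. -/
inductive Justified (S : Set Scheme) (D : Set (Sym2 MV)) : List MF → Prop
  | nil : Justified S D []
  | snoc {P : List MF} {Ξ : Scheme} {hs : Finset MF} {F : MF} (hP : Justified S D P)
      (hhs : ∀ h ∈ hs, h ∈ P) (hΞ : Ξ ∈ S) (hinst : Ξ.Inst ⟨hs, F, D⟩) : Justified S D (P ++ [F])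

namespace Justified

theorem mono {E : Set (Sym2 MV)} (hDE : D ⊆ E) {P : List MF} (h : Justified S D P) :
    Justified S E P := by
  induction h with
  | nil => exact .nil
  | snoc _ hhs hΞ hinst ih => exact ih.snoc hhs hΞ (hinst.mono hDE)

theorem append {P Q : List MF} (hP : Justified S D P) (hQ : Justified S D Q) :
    Justified S D (P ++ Q) := by
  induction hQ with
  | nil => simpa using hP
  | snoc _ hhs hΞ hinst ih =>
    rw [← List.append_assoc]
    exact ih.snoc (fun h hh => List.mem_append_right _ (hhs h hh)) hΞ hinst

theorem exists_superset {Q : List MF} (h : ∀ F ∈ Q, ∃ P, Justified S D (P ++ [F])) :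
    ∃ P, Justified S D P ∧ Q ⊆ P := by
  induction Q with
  | nil => exact ⟨[], .nil, List.nil_subset _⟩
  | cons F Q ih =>
    obtain ⟨⟨P, hP⟩, hQ⟩ := List.forall_mem_cons.1 h
    obtain ⟨R, hR, hQR⟩ := ih hQ
    exact ⟨_, hP.append hR, List.cons_subset.2 ⟨by simp, List.subset_append_of_subset_right _ hQR⟩⟩

theorem exists_inst_getElem {P : List MF} (h : Justified S D P) (k : ℕ) (hk : k < P.length) :
    ∃ hs : Finset MF, (∀ h ∈ hs, ∃ (l : ℕ) (hl : l < k), P[l] = h) ∧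
      ∃ Ξ ∈ S, Ξ.Inst ⟨hs, P[k], D⟩ := by
  induction h with
  | nil => simp at hk
  | @snoc P Ξ hs F _ hhs hΞ hinst ih =>
    rcases Nat.lt_succ_iff_lt_or_eq.1 (List.length_append ▸ hk) with hkP | rfl
    · obtain ⟨hs', hhs', hinst'⟩ := ih hkP
      refine ⟨hs', fun h hh => ?_, by simpa [List.getElem_append_left hkP] using hinst'⟩
      obtain ⟨l, hl, rfl⟩ := hhs' h hh
      exact ⟨l, hl, List.getElem_append_left (hl.trans hkP)⟩
    · refine ⟨hs, fun h hh => ?_, Ξ, hΞ, by simpa using hinst⟩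
      obtain ⟨l, hl, rfl⟩ := List.getElem_of_mem (hhs h hh)
      exact ⟨l, hl, List.getElem_append_left hl⟩

end Justified

theorem Derivable.exists_justified {F : MF} (h : Derivable S D F) :
    ∃ P, Justified S D (P ++ [F]) := by
  induction h with
  | @inst Ξ hs F hΞ hinst _ ih =>
    obtain ⟨P, hP, hsP⟩ := Justified.exists_superset fun G hG => ih G (Finset.mem_toList.1 hG)
    exact ⟨P, hP.snoc (fun h hh => hsP (Finset.mem_toList.2 hh)) hΞ hinst⟩

theorem proofDV_mono (Φ : Scheme) {P Q : List MF} (h : P ⊆ Q) : proofDV Φ P ⊆ proofDV Φ Q := by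
  have hOC : listOC P ⊆ listOC Q := fun m ⟨F, hF, hm⟩ => ⟨F, h hF, hm⟩
  refine Set.union_subset_union_right _ ?_
  rintro _ ⟨m, n, hm, hmΦ, hn, rfl⟩
  exact ⟨m, n, hOC hm, hmΦ, hOC hn, rfl⟩

/-- The list `Q` serves to introduce dummy metavariables: the conclusion need not be derived from
its other entries. -/
theorem provable_of_derivable {Φ : Scheme} {Q : List MF}
    (hQ : ∀ F ∈ Q, Derivable S (proofDV Φ Q) F) (hΦ : Φ.concl ∈ Q) : Provable S Φ := by
  obtain ⟨P, hP, hQP⟩ := Justified.exists_superset fun F hF => (hQ F hF).exists_justified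
  obtain ⟨R, hR⟩ := (hQ _ hΦ).exists_justified
  have hJ := (hP.append hR).mono
    (proofDV_mono Φ (List.subset_append_of_subset_left (R ++ [Φ.concl]) hQP))
  exact ⟨P ++ (R ++ [Φ.concl]), by simp, by simp [← List.append_assoc],
    fun k hk => .inr (hJ.exists_inst_getElem k hk)⟩

/-! ### The schemes of `T` as rules -/

namespace Derivable

variable {p q r s t : MF} {u v w : ℕ}

theorem mp (h : Derivable Tsys D (p ⇒ q)) (hp : Derivable Tsys D p) : Derivable Tsys D q :=
  of_mem (Ξ := ax_mp) (by simp [Tsys]) (.ofLists [] [p, q]) (by simp [ax_mp]) (by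
    rintro _ hF
    rcases Finset.mem_insert.1 hF with rfl | hF
    · exact hp
    · rw [Finset.mem_singleton.1 hF]
      exact h)

theorem gen (v : ℕ) (h : Derivable Tsys D p) : Derivable Tsys D (.all v p) :=
  of_mem (Ξ := ax_gen) (by simp [Tsys]) (.ofLists [v] [p]) (by simp [ax_gen]) (by
    rintro _ hF
    rw [Finset.mem_singleton.1 hF]
    exact h)

theorem minimp : Derivable Tsys D (p ⇒ (q ⇒ r) ⇒ ((s ⇒ q) ⇒ r ⇒ t) ⇒ q ⇒ t) :=
  of_mem (Ξ := ax_minimp) (by simp [Tsys]) (.ofLists [] [p, q, r, s, t])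
    (by simp [ax_minimp]) (by simp [ax_minimp])

theorem peirce : Derivable Tsys D (((p ⇒ q) ⇒ p) ⇒ p) :=
  of_mem (Ξ := ax_peirce) (by simp [Tsys]) (.ofLists [] [p, q])
    (by simp [ax_peirce]) (by simp [ax_peirce])

theorem contrap : Derivable Tsys D ((p ⇒ ∼q) ⇒ q ⇒ ∼p) :=
  of_mem (Ξ := ax_contrap) (by simp [Tsys]) (.ofLists [] [p, q])
    (by simp [ax_contrap]) (by simp [ax_contrap])

theorem not_elim : Derivable Tsys D (∼p ⇒ p ⇒ q) :=
  of_mem (Ξ := ax_notelim) (by simp [Tsys]) (.ofLists [] [p, q])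
    (by simp [ax_notelim]) (by simp [ax_notelim])

theorem all_distr : Derivable Tsys D (.all v (p ⇒ q) ⇒ .all v p ⇒ .all v q) :=
  of_mem (Ξ := ax_ALLdistr) (by simp [Tsys]) (.ofLists [v] [p, q])
    (by simp [ax_ALLdistr]) (by simp [ax_ALLdistr])

theorem vacGen (h : DVFresh D v p) : Derivable Tsys D (p ⇒ .all v p) := by
  refine of_mem (Ξ := ax_vacGen) (by simp [Tsys]) (.ofLists [v] [p]) ?_ (by simp [ax_vacGen])
  rintro m n hmn m' hm n' hn
  rcases Sym2.eq_iff.1 (Set.mem_singleton_iff.1 hmn) with ⟨rfl, rfl⟩ | ⟨rfl, rfl⟩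
  · obtain rfl : m' = .vr v := hm
    exact h n' hn
  · obtain rfl : n' = .vr v := hn
    exact (h m' hm).symm

theorem eq_refl : Derivable Tsys D (.eq u u) :=
  of_mem (Ξ := ax_EQrefl) (by simp [Tsys]) (.ofLists [u] []) (by simp [ax_EQrefl])
    (by simp [ax_EQrefl])

theorem eq_symm : Derivable Tsys D (.eq u v ⇒ .eq v u) :=
  of_mem (Ξ := ax_EQsymm) (by simp [Tsys]) (.ofLists [u, v] []) (by simp [ax_EQsymm])
    (by simp [ax_EQsymm])

theorem eq_trans : Derivable Tsys D (.eq u v ⇒ .eq v w ⇒ .eq u w) :=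
  of_mem (Ξ := ax_EQtrans) (by simp [Tsys]) (.ofLists [u, v, w] []) (by simp [ax_EQtrans])
    (by simp [ax_EQtrans])

theorem exists_eq (h : DVDistinct D (.vr u) (.vr v)) :
    Derivable Tsys D ∼(.all v ∼(.eq v u)) := by
  refine mp (of_mem (Ξ := ax_denot) (by simp [Tsys]) (.ofLists [u, v] []) ?_
    (by simp [ax_denot])) eq_refl
  rintro m n hmn m' hm n' hn
  rcases Sym2.eq_iff.1 (Set.mem_singleton_iff.1 hmn) with ⟨rfl, rfl⟩ | ⟨rfl, rfl⟩
  · obtain rfl : m' = .vr u := hm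
    obtain rfl : n' = .vr v := hn
    exact h
  · obtain rfl : m' = .vr v := hm
    obtain rfl : n' = .vr u := hn
    exact h.symm

/-! ### Implicational logic -/

theorem minimp_mp : Derivable Tsys D ((q ⇒ r) ⇒ ((s ⇒ q) ⇒ r ⇒ t) ⇒ q ⇒ t) :=
  minimp.mp (minimp (p := q) (q := q) (r := q) (s := q) (t := q))

theorem imp_of_imp_imp (h : Derivable Tsys D (q ⇒ r)) (h' : Derivable Tsys D ((s ⇒ q) ⇒ r ⇒ t)) :
    Derivable Tsys D (q ⇒ t) :=
  (minimp_mp.mp h).mp h'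

theorem exchange_of_imp : Derivable Tsys D (((p ⇒ q) ⇒ r ⇒ s) ⇒ r ⇒ q ⇒ s) :=
  imp_of_imp_imp (minimp (q := q) (r := r) (s := p) (t := s)) minimp_mp

theorem assertion : Derivable Tsys D (p ⇒ (p ⇒ q) ⇒ q) := by
  set A := (p ⇒ p) ⇒ ((p ⇒ p) ⇒ p ⇒ p) ⇒ p ⇒ p
  have any_imp_A {a : MF} : Derivable Tsys D (a ⇒ A) := minimp
  have elim_A : Derivable Tsys D ((A ⇒ p ⇒ q) ⇒ p ⇒ q) :=
    imp_of_imp_imp any_imp_A ((minimp_mp (s := p)).mp any_imp_A)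
  exact exchange_of_imp.mp elim_A

theorem imp_of_imp_left : Derivable Tsys D (((p ⇒ q) ⇒ r) ⇒ q ⇒ r) :=
  exchange_of_imp.mp assertion

theorem const : Derivable Tsys D (p ⇒ q ⇒ p) :=
  imp_of_imp_left.mp (imp_of_imp_left (p := q))

theorem syllogism : Derivable Tsys D ((p ⇒ q) ⇒ (q ⇒ r) ⇒ p ⇒ r) :=
  imp_of_imp_imp (s := p) (minimp_mp (s := p)) (const.mp imp_of_imp_left)

theorem trans (h : Derivable Tsys D (p ⇒ q)) (h' : Derivable Tsys D (q ⇒ r)) :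
    Derivable Tsys D (p ⇒ r) :=
  (syllogism.mp h).mp h'

theorem contraction : Derivable Tsys D ((p ⇒ p ⇒ q) ⇒ p ⇒ q) :=
  trans syllogism peirce

theorem exchange : Derivable Tsys D ((p ⇒ q ⇒ r) ⇒ q ⇒ p ⇒ r) :=
  trans syllogism (syllogism.mp assertion)

theorem frege : Derivable Tsys D ((p ⇒ q ⇒ r) ⇒ (p ⇒ q) ⇒ p ⇒ r) := by
  have comp_left {a b c : MF} : Derivable Tsys D ((a ⇒ b) ⇒ (c ⇒ a) ⇒ c ⇒ b) :=
    exchange.mp syllogism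
  exact exchange.trans (comp_left.trans (comp_left.mp contraction))

end Derivable

/-! ### Natural deduction -/

/-- Derivability in `T` from the assumptions `Γ`, the head of the list being the innermost
antecedent. It is defined by discharging all the assumptions, so that the deduction theorem holds by
definition and the context rules are the ones to be proved. -/
def Entails (D : Set (Sym2 MV)) (Γ : List MF) (F : MF) : Prop :=
  Derivable Tsys D (Γ.foldl (fun G H => H ⇒ G) F)

local notation:45 Γ " ⊢[" D "] " F => Entails D Γ F

namespace Entails

variable {Γ : List MF} {F F' G G' H : MF} {u v w i i' j j' : ℕ}

theorem intro (h : (F :: Γ) ⊢[D] G) : Γ ⊢[D] F ⇒ G := h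

theorem undischarge (h : Γ ⊢[D] F ⇒ G) : (F :: Γ) ⊢[D] G := h

theorem of_derivable (h : Derivable Tsys D F) : Γ ⊢[D] F := by
  induction Γ generalizing F with
  | nil => exact h
  | cons _ _ ih => exact ih (Derivable.const.mp h)

theorem mp (h : Γ ⊢[D] F ⇒ G) (hF : Γ ⊢[D] F) : Γ ⊢[D] G := by
  induction Γ generalizing F G with
  | nil => exact Derivable.mp h hF
  | cons _ _ ih => exact ih (ih (of_derivable Derivable.frege) h) hF

theorem weaken (h : Γ ⊢[D] F) : (G :: Γ) ⊢[D] F :=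
  undischarge (mp (of_derivable Derivable.const) h)

theorem head : (F :: Γ) ⊢[D] F :=
  of_derivable (Γ := Γ) (Derivable.contraction.mp Derivable.const)

theorem imp_trans (h : Γ ⊢[D] F ⇒ G) (h' : Γ ⊢[D] G ⇒ H) : Γ ⊢[D] F ⇒ H :=
  mp (mp (of_derivable Derivable.syllogism) h) h'

theorem absurd (h : Γ ⊢[D] F) (h' : Γ ⊢[D] ∼F) : Γ ⊢[D] G :=
  mp (mp (of_derivable Derivable.not_elim) h') h

theorem not_intro (h : (F :: Γ) ⊢[D] G) (h' : (F :: Γ) ⊢[D] ∼G) : Γ ⊢[D] ∼F :=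
  mp (mp (of_derivable Derivable.contrap) (intro (absurd h h')))
    (of_derivable (Derivable.eq_refl (u := 0)))

theorem by_contra (h : (∼F :: Γ) ⊢[D] G) (h' : (∼F :: Γ) ⊢[D] ∼G) : Γ ⊢[D] F := by
  have not_of_imp : ((F ⇒ ∼(.eq 0 0)) :: Γ) ⊢[D] ∼F :=
    not_intro (of_derivable (Derivable.eq_refl (u := 0))) (mp (weaken head) head)
  have of_not : Γ ⊢[D] ∼F ⇒ F := intro (absurd h h')
  exact mp (of_derivable Derivable.peirce) (intro (mp (weaken of_not) not_of_imp))

theorem imp_mono (h : Γ ⊢[D] F' ⇒ F) (h' : Γ ⊢[D] G ⇒ G') : Γ ⊢[D] (F ⇒ G) ⇒ F' ⇒ G' :=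
  intro (intro (mp (weaken (weaken h')) (mp (weaken head) (mp (weaken (weaken h)) head))))

theorem not_mono (h : Γ ⊢[D] F ⇒ G) : Γ ⊢[D] ∼G ⇒ ∼F :=
  intro (not_intro (mp (weaken (weaken h)) head) (weaken head))

theorem eq_symm (h : Γ ⊢[D] .eq i j) : Γ ⊢[D] .eq j i :=
  mp (of_derivable Derivable.eq_symm) h

theorem eq_trans (h : Γ ⊢[D] .eq u v) (h' : Γ ⊢[D] .eq v w) : Γ ⊢[D] .eq u w :=
  mp (mp (of_derivable Derivable.eq_trans) h) h'

theorem eq_congr (hi : Γ ⊢[D] .eq i i') (hj : Γ ⊢[D] .eq j j') :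
    Γ ⊢[D] .eq i j ⇒ .eq i' j' :=
  intro (eq_trans (eq_symm (weaken hi)) (eq_trans head (weaken hj)))

theorem all_intro (hΓ : ∀ G ∈ Γ, DVFresh D v G) (h : Γ ⊢[D] F) : Γ ⊢[D] .all v F := by
  induction Γ generalizing F with
  | nil => exact Derivable.gen v h
  | cons G Γ ih =>
    obtain ⟨hG, hΓ⟩ := List.forall_mem_cons.1 hΓ
    have all_imp : Γ ⊢[D] .all v G ⇒ .all v F :=
      mp (of_derivable Derivable.all_distr) (ih hΓ (intro h))
    exact imp_trans (of_derivable (Derivable.vacGen hG)) all_imp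

theorem all_mono (hΓ : ∀ G ∈ Γ, DVFresh D v G) (h : Γ ⊢[D] F ⇒ G) :
    Γ ⊢[D] .all v F ⇒ .all v G :=
  mp (of_derivable Derivable.all_distr) (all_intro hΓ h)

/-- If `∀u F` held but not `G`, every `u` would differ from `v`. -/
theorem all_elim_of_eq (h : [.eq u v] ⊢[D] F ⇒ G) (huv : DVDistinct D (.vr u) (.vr v))
    (hu : DVFresh D u G) : [] ⊢[D] .all u F ⇒ G := by
  have ne_of_not : [] ⊢[D] F ⇒ ∼G ⇒ ∼(.eq u v) :=
    intro (intro (not_intro (mp (mp (of_derivable h) head) (weaken (weaken head))) (weaken head)))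
  have all_ne : [] ⊢[D] .all u F ⇒ .all u ∼G ⇒ .all u ∼(.eq u v) :=
    imp_trans (all_mono (by simp) ne_of_not) (of_derivable Derivable.all_distr)
  have all_not : [∼G, .all u F] ⊢[D] .all u ∼G :=
    mp (of_derivable (Derivable.vacGen (p := ∼G) hu)) head
  exact intro (by_contra (mp (mp (of_derivable all_ne) (weaken head)) all_not)
    (of_derivable (Derivable.exists_eq huv.symm)))

theorem all_rename (h : [.eq u v] ⊢[D] F ⇒ G) (huv : DVDistinct D (.vr u) (.vr v))
    (hu : DVFresh D u G) (hv : DVFresh D v F) : [] ⊢[D] .all u F ⇒ .all v G := by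
  refine intro (all_intro ?_ (undischarge (all_elim_of_eq h huv hu)))
  simpa [dvFresh_all] using ⟨huv.symm, hv⟩

end Entails

/-! ### Renaming a variable everywhere -/

/-- The substitution replacing the variable metavariable `y` by `z`. Acting on a metaformula, it
also renames the bound occurrences of `y`. -/
def Subst.rename (y z : ℕ) : Subst where
  vr := Function.update id y z
  fm := .phi
  finVr := (Set.finite_singleton y).subset fun i hi => by
    by_contra h
    exact hi (Function.update_of_ne h _ _)
  finFm := by simp

section Rename

variable {F : MF} {x y z : ℕ}

theorem dvFresh_substMF_rename (hyz : DVDistinct D (.vr y) (.vr z))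
    (hy : ∀ m ∈ F.OC, m ≠ .vr y → s(.vr y, m) ∈ D) :
    DVFresh D y (F.substMF (.rename y z)) := by
  intro m hm
  obtain ⟨n, hn, hmn⟩ := MF.mem_OC_substMF.1 hm
  by_cases hny : n = .vr y
  · obtain rfl : m = .vr z := by simpa [hny, Subst.appMV, Subst.rename] using hmn
    exact hyz
  · obtain rfl : m = n := by
      cases n <;> simp_all [Subst.appMV, Subst.rename, MF.OC]
    exact ⟨Ne.symm hny, hy m hn hny⟩

namespace Entails

theorem eq_rename (i : ℕ) : [.eq y z] ⊢[D] .eq i ((Subst.rename y z).vr i) := by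
  obtain rfl | hi := eq_or_ne i y
  · simpa [Subst.rename] using head
  · simpa [Subst.rename, hi] using of_derivable Derivable.eq_refl

theorem equiv_substMF_rename (hyz : DVDistinct D (.vr y) (.vr z)) (hz : DVFresh D z F)
    (hy : ∀ m ∈ F.OC, m ≠ .vr y → s(.vr y, m) ∈ D) :
    ([.eq y z] ⊢[D] F ⇒ F.substMF (.rename y z)) ∧
      ([.eq y z] ⊢[D] F.substMF (.rename y z) ⇒ F) := by
  induction F with
  | phi i => exact ⟨intro head, intro head⟩
  | eq i j =>
    exact ⟨eq_congr (eq_rename i) (eq_rename j),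
      eq_congr (eq_symm (eq_rename i)) (eq_symm (eq_rename j))⟩
  | imp a b iha ihb =>
    obtain ⟨hza, hzb⟩ := dvFresh_imp.1 hz
    obtain ⟨ha, ha'⟩ := iha hza fun m hm => hy m (.inl hm)
    obtain ⟨hb, hb'⟩ := ihb hzb fun m hm => hy m (.inr hm)
    exact ⟨imp_mono ha' hb, imp_mono ha hb'⟩
  | not a ih =>
    obtain ⟨ha, ha'⟩ := ih hz hy
    exact ⟨not_mono ha', not_mono ha⟩
  | all u a ih =>
    obtain ⟨hzu, hza⟩ := dvFresh_all.1 hz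
    have hya : ∀ m ∈ a.OC, m ≠ .vr y → s(.vr y, m) ∈ D := fun m hm => hy m (.inr hm)
    obtain ⟨ha, ha'⟩ := ih hza hya
    obtain rfl | huy := eq_or_ne u y
    · have hfresh := dvFresh_substMF_rename hyz hya
      have hsymm : [.eq z u] ⊢[D] a.substMF (.rename u z) ⇒ a :=
        mp (of_derivable ha') (eq_symm head)
      simpa [MF.substMF, Subst.rename] using And.intro
        (of_derivable (all_rename ha hyz hfresh hza))
        (of_derivable (all_rename hsymm hyz.symm hza hfresh))
    · have hyu : DVDistinct D (.vr y) (.vr u) :=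
        ⟨by simpa using huy.symm, hy _ (.inl rfl) (by simpa using huy)⟩
      have hu : ∀ G ∈ [MF.eq y z], DVFresh D u G := by
        simpa [dvFresh_eq] using ⟨hyu.symm, hzu.symm⟩
      simpa [MF.substMF, Subst.rename, huy] using And.intro (all_mono hu ha) (all_mono hu ha')

theorem all_comm_of_dvFresh (hz : DVFresh D z (.all x (.all y F)))
    (hy : ∀ m ∈ (MF.all x F).OC, m ≠ .vr y → s(.vr y, m) ∈ D) :
    [] ⊢[D] .all x (.all y F) ⇒ .all y (.all x F) := by
  obtain rfl | hxy := eq_or_ne x y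
  · exact intro head
  obtain ⟨hzx, hzyF⟩ := dvFresh_all.1 hz
  obtain ⟨hzy, hzF⟩ := dvFresh_all.1 hzyF
  have hyx : DVDistinct D (.vr y) (.vr x) :=
    ⟨by simpa using hxy.symm, hy _ (.inl rfl) (by simpa using hxy)⟩
  have hyF : ∀ m ∈ F.OC, m ≠ .vr y → s(.vr y, m) ∈ D := fun m hm => hy m (.inr hm)
  set F' := F.substMF (.rename y z)
  have hyF' : DVFresh D y F' := dvFresh_substMF_rename hzy.symm hyF
  obtain ⟨hFF', hF'F⟩ := equiv_substMF_rename hzy.symm hzF hyF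
  have all_imp_rename : [] ⊢[D] .all x (.all y F) ⇒ .all x F' :=
    all_mono (by simp) (all_elim_of_eq hFF' hzy.symm hyF')
  have all_rename_imp : [.eq z y] ⊢[D] .all x F' ⇒ .all x F :=
    all_mono (by simpa [dvFresh_eq] using ⟨hzx.symm, hyx.symm⟩)
      (mp (of_derivable hF'F) (eq_symm head))
  have all_all_rename : [] ⊢[D] .all x (.all y F) ⇒ .all z (.all x F') :=
    intro (all_intro (by simpa using hz) all_imp_rename)
  exact imp_trans all_all_rename
    (all_rename all_rename_imp hzy (dvFresh_all.2 ⟨hzx, hzF⟩) (dvFresh_all.2 ⟨hyx, hyF'⟩))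

end Entails

end Rename

/-- For every metaformula Φ and variable metavariables x and y, the scheme
∀x∀y Φ → ∀y∀x Φ with DV conditions exactly the pairs {y, m} for
m ∈ ({x} ∪ OC(Φ)) \ {y}, is provable from the subsystem T. -/
theorem ALLcomm_object_provable (Φ : MF) (x y : ℕ) :
    Provable Tsys
      ⟨∅, .imp (.all x (.all y Φ)) (.all y (.all x Φ)),
        {q | ∃ m ∈ insert (MV.vr x) Φ.OC, m ≠ MV.vr y ∧ q = s(MV.vr y, m)}⟩ := by
  set Ψ : MF := .imp (.all x (.all y Φ)) (.all y (.all x Φ))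
  obtain ⟨z, hz⟩ := Ψ.exists_vr_notMem_OC
  refine provable_of_derivable (Q := [.eq z z, Ψ]) ?_ (by simp)
  set Ω : Scheme := ⟨∅, Ψ, _⟩
  have hzfresh : DVFresh (proofDV Ω [.eq z z, Ψ]) z (.all x (.all y Φ)) := by
    refine fun m hm => ⟨?_, .inr ⟨.vr z, m, ?_, ?_, ?_, rfl⟩⟩
    · rintro rfl
      exact hz (.inl hm)
    · exact ⟨.eq z z, by simp, .inl rfl⟩
    · simpa [Ω, Scheme.OC] using hz
    · exact ⟨Ψ, by simp, .inl hm⟩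
  have hderiv : [] ⊢[proofDV Ω [.eq z z, Ψ]] Ψ :=
    Entails.all_comm_of_dvFresh hzfresh fun m hm hmy => .inl ⟨m, hm, hmy, rfl⟩
  exact List.forall_mem_cons.2 ⟨Derivable.eq_refl, List.forall_mem_singleton.2 hderiv⟩
end

section
/- Every true quantifier-free scheme (a scheme whose hypotheses and conclusion contain no universal quantifier) is supertrue. -/
set_option autoImplicit false

/-!
On a quantifier-free metaformula the `(i,j)`-transform only acts inside the substituted formulas.
Hence the transform of an instance of a quantifier-free scheme, taken along `σ`, is again an
instance, taken along the substitution that sends `φ_k` to the transform of `σ φ_k`; it respects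
the DV conditions because a transform introduces no new metavariable. Truth passes to instances,
so all transforms of instances of a true quantifier-free scheme are true.
-/

namespace MF

theorem OC_substMF (σ : Subst) (f : MF) : (f.substMF σ).OC = ⋃ m ∈ f.OC, σ.appMV m := by
  induction f with
  | phi i => simp only [substMF, OC, Set.biUnion_singleton, Subst.appMV]
  | eq i j => simp only [substMF, OC, Set.biUnion_pair, Subst.appMV, Set.singleton_union]
  | imp a b iha ihb => simp only [substMF, OC, iha, ihb, Set.biUnion_union]
  | not _ ih => exact ih
  | all i a ih =>
    simp only [substMF, OC, ih, Set.biUnion_insert, Subst.appMV, Set.singleton_union]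

theorem vars_osubst (τ : OSubst) (f : MF) : (f.osubst τ).vars = ⋃ m ∈ f.OC, τ.appVars m := by
  induction f with
  | phi i => simp only [osubst, OC, Set.biUnion_singleton, OSubst.appVars]
  | eq i j =>
    simp only [osubst, OC, FM.vars, Set.biUnion_pair, OSubst.appVars, Set.singleton_union]
  | imp a b iha ihb => simp only [osubst, OC, FM.vars, iha, ihb, Set.biUnion_union]
  | not _ ih => exact ih
  | all i a ih =>
    simp only [osubst, OC, FM.vars, ih, Set.biUnion_insert, OSubst.appVars, Set.singleton_union]

theorem OC_transfAux_subset {i j : ℕ} {f : MF} {ins : Bool} {S : Set MV} (hf : f.OC ⊆ S)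
    (hi : ins = true → MV.vr i ∈ S) : (f.transfAux i j ins).OC ⊆ S := by
  induction f generalizing ins with
  | phi k => exact hf
  | eq a b =>
    obtain ⟨ha, hb⟩ := Set.pair_subset_iff.mp hf
    refine Set.pair_subset ?_ ?_
    · split_ifs with h
      exacts [hi h.1, ha]
    · split_ifs with h
      exacts [hi h.1, hb]
  | imp a b iha ihb =>
    obtain ⟨ha, hb⟩ := Set.union_subset_iff.mp hf
    exact Set.union_subset (iha ha hi) (ihb hb hi)
  | not a ih => exact ih hf hi
  | all k a ih =>
    obtain ⟨hk, ha⟩ := Set.insert_subset_iff.mp hf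
    refine Set.insert_subset ?_ (ih ha fun h => ?_)
    · split_ifs with h
      exacts [hi h.1, hk]
    · rcases (Bool.or_eq_true _ _).mp h with hins | hki
      · exact hi hins
      · exact of_decide_eq_true hki ▸ hk

theorem OC_transform_subset (i j : ℕ) (f : MF) : (f.transform i j).OC ⊆ f.OC :=
  OC_transfAux_subset subset_rfl Bool.false_ne_true.elim

end MF

namespace Subst

/-- The identity substitution. -/
protected def id : Subst := ⟨_root_.id, MF.phi, by simp, by simp⟩

/-- The composite substitution, performing `σ` first and then `σ'`. -/
def comp (σ' σ : Subst) : Subst where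
  vr i := σ'.vr (σ.vr i)
  fm i := (σ.fm i).substMF σ'
  finVr := (σ.finVr.union σ'.finVr).subset fun i hi =>
    not_and_or.mp fun ⟨hσ, hσ'⟩ => hi (by rw [hσ, hσ'])
  finFm := (σ.finFm.union σ'.finFm).subset fun i hi =>
    not_and_or.mp fun ⟨hσ, hσ'⟩ => hi (by rw [hσ, MF.substMF, hσ'])

/-- The substitution sending each formula metavariable `φ_k` to the `(i,j)`-transform of `σ φ_k`,
and agreeing with `σ` on variable metavariables. -/
def transform (i j : ℕ) (σ : Subst) : Subst where
  vr := σ.vr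
  fm k := (σ.fm k).transform i j
  finVr := σ.finVr
  finFm := σ.finFm.subset fun k hk h => hk (by rw [h]; rfl)

theorem appMV_id (m : MV) : Subst.id.appMV m = {m} := by
  cases m <;> rfl

theorem appMV_comp (σ' σ : Subst) (m : MV) :
    (σ'.comp σ).appMV m = ⋃ p ∈ σ.appMV m, σ'.appMV p := by
  cases m with
  | vr i => simp only [appMV, comp, Set.biUnion_singleton]
  | fm i => exact MF.OC_substMF σ' (σ.fm i)

theorem appMV_transform_subset (i j : ℕ) (σ : Subst) (m : MV) :
    (σ.transform i j).appMV m ⊆ σ.appMV m := by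
  cases m with
  | vr k => exact subset_rfl
  | fm k => exact MF.OC_transform_subset i j (σ.fm k)

theorem dvMap_id (D : Set (Sym2 MV)) : Subst.id.dvMap D ⊆ D := by
  rintro _ ⟨m, n, _, _, hmn, hm, hn, rfl⟩
  rw [appMV_id, Set.mem_singleton_iff] at hm hn
  rwa [hm, hn]

theorem dvMap_comp_subset (σ' σ : Subst) (D : Set (Sym2 MV)) :
    (σ'.comp σ).dvMap D ⊆ σ'.dvMap (σ.dvMap D) := by
  rintro _ ⟨m, n, m', n', hmn, hm', hn', rfl⟩
  rw [appMV_comp] at hm' hn'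
  obtain ⟨p, hp, hm'⟩ := Set.mem_iUnion₂.mp hm'
  obtain ⟨q, hq, hn'⟩ := Set.mem_iUnion₂.mp hn'
  exact ⟨p, q, m', n', ⟨m, n, p, q, hmn, hp, hq, rfl⟩, hm', hn', rfl⟩

theorem dvMap_mono (σ : Subst) {D E : Set (Sym2 MV)} (h : D ⊆ E) : σ.dvMap D ⊆ σ.dvMap E := by
  rintro _ ⟨m, n, m', n', hmn, hm', hn', rfl⟩
  exact ⟨m, n, m', n', h hmn, hm', hn', rfl⟩

theorem dvMap_transform_subset (i j : ℕ) (σ : Subst) (D : Set (Sym2 MV)) :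
    (σ.transform i j).dvMap D ⊆ σ.dvMap D := by
  rintro _ ⟨m, n, m', n', hmn, hm', hn', rfl⟩
  exact ⟨m, n, m', n', hmn, σ.appMV_transform_subset i j m hm',
    σ.appMV_transform_subset i j n hn', rfl⟩

theorem inter_biUnion_appMV_eq_empty {α : Type*} {σ : Subst} {D E : Set (Sym2 MV)}
    {F : MV → Set α} (hF : ∀ p q : MV, s(p, q) ∈ E → F p ∩ F q = ∅) (hσ : σ.dvMap D ⊆ E)
    {m n : MV} (hmn : s(m, n) ∈ D) :
    (⋃ p ∈ σ.appMV m, F p) ∩ (⋃ q ∈ σ.appMV n, F q) = ∅ := by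
  simp only [← Set.disjoint_iff_inter_eq_empty, Set.disjoint_iUnion_left,
    Set.disjoint_iUnion_right] at hF ⊢
  exact fun q hq p hp => hF p q (hσ ⟨m, n, p, q, hmn, hp, hq, rfl⟩)

theorem Legit.comp {Φ Ψ : Scheme} {σ' σ : Subst} (hσ' : σ'.Legit Ψ)
    (hσ : σ.dvMap Φ.dv ⊆ Ψ.dv) : (σ'.comp σ).Legit Φ := by
  intro m n hmn
  rw [appMV_comp, appMV_comp]
  exact inter_biUnion_appMV_eq_empty hσ' hσ hmn

theorem Legit.transform {Φ : Scheme} {σ : Subst} (hσ : σ.Legit Φ) (i j : ℕ) :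
    (σ.transform i j).Legit Φ := fun m n hmn =>
  Set.subset_eq_empty (Set.inter_subset_inter (σ.appMV_transform_subset i j m)
    (σ.appMV_transform_subset i j n)) (hσ m n hmn)

end Subst

namespace OSubst

/-- The composite object-substitution, performing the substitution `σ` first and then `τ`. -/
def comp (τ : OSubst) (σ : Subst) : OSubst where
  vr i := τ.vr (σ.vr i)
  fm i := (σ.fm i).osubst τ

theorem appVars_comp (τ : OSubst) (σ : Subst) (m : MV) :
    (τ.comp σ).appVars m = ⋃ p ∈ σ.appMV m, τ.appVars p := by
  cases m with
  | vr i => simp only [appVars, comp, Subst.appMV, Set.biUnion_singleton]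
  | fm i => exact MF.vars_osubst τ (σ.fm i)

theorem Legit.comp {Φ Ψ : Scheme} {τ : OSubst} {σ : Subst} (hτ : τ.Legit Ψ)
    (hσ : σ.dvMap Φ.dv ⊆ Ψ.dv) : (τ.comp σ).Legit Φ := by
  intro m n hmn
  rw [appVars_comp, appVars_comp]
  exact Subst.inter_biUnion_appMV_eq_empty hτ hσ hmn

end OSubst

theorem FM.vars_nonempty (f : FM) : f.vars.Nonempty := by
  induction f with
  | eq i j => exact Set.insert_nonempty i {j}
  | imp _ _ iha _ => exact iha.inl
  | not _ ih => exact ih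
  | all i a _ => exact Set.insert_nonempty i a.vars

theorem OSubst.appVars_nonempty (τ : OSubst) (m : MV) : (τ.appVars m).Nonempty := by
  cases m with
  | vr i => exact Set.singleton_nonempty (τ.vr i)
  | fm i => exact (τ.fm i).vars_nonempty

theorem OSubst.Legit.ne_of_mem_dv {Φ : Scheme} {τ : OSubst} (hτ : τ.Legit Φ) {m n : MV}
    (hmn : s(m, n) ∈ Φ.dv) : m ≠ n := by
  rintro rfl
  exact (τ.appVars_nonempty m).ne_empty ((Set.inter_self _).symm.trans (hτ m m hmn))

namespace MF

theorem substMF_id (f : MF) : f.substMF Subst.id = f := by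
  induction f with
  | phi i => rfl
  | eq i j => rfl
  | imp a b iha ihb => exact congrArg₂ imp iha ihb
  | not a ih => exact congrArg not ih
  | all i a ih => exact congrArg (all i) ih

theorem substMF_comp (σ' σ : Subst) (f : MF) :
    f.substMF (σ'.comp σ) = (f.substMF σ).substMF σ' := by
  induction f with
  | phi i => rfl
  | eq i j => rfl
  | imp a b iha ihb => exact congrArg₂ imp iha ihb
  | not a ih => exact congrArg not ih
  | all i a ih => exact congrArg (all (σ'.vr (σ.vr i))) ih

theorem osubst_comp (τ : OSubst) (σ : Subst) (f : MF) :
    f.osubst (τ.comp σ) = (f.substMF σ).osubst τ := by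
  induction f with
  | phi i => rfl
  | eq i j => rfl
  | imp a b iha ihb => exact congrArg₂ FM.imp iha ihb
  | not a ih => exact congrArg FM.not ih
  | all i a ih => exact congrArg (FM.all (τ.vr (σ.vr i))) ih

theorem QFree.transform_substMF {f : MF} (hf : f.QFree) (i j : ℕ) (σ : Subst) :
    (f.substMF σ).transform i j = f.substMF (σ.transform i j) := by
  induction f with
  | phi k => rfl
  | eq a b => simp [substMF, MF.transform, transfAux, Subst.transform]
  | imp a b iha ihb => exact congrArg₂ imp (iha hf.1) (ihb hf.2)
  | not a ih => exact congrArg not (ih hf)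
  | all k a _ => exact hf.elim

end MF

namespace Scheme

-- Reflexivity fails without a legitimate `τ`: a DV condition `{m, m}` is violated by every
-- substitution, including the identity.
theorem inst_self_of_legit {Φ : Scheme} {τ : OSubst} (hτ : τ.Legit Φ) : Φ.Inst Φ := by
  refine ⟨Subst.id, fun m n hmn => ?_, ?_, (MF.substMF_id _).symm, Subst.dvMap_id _⟩
  · rw [Subst.appMV_id, Subst.appMV_id, Set.singleton_inter_eq_empty, Set.mem_singleton_iff]
    exact hτ.ne_of_mem_dv hmn
  · rw [show MF.substMF Subst.id = id from funext MF.substMF_id, Finset.image_id]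

theorem Inst.trans {Φ Ψ Ω : Scheme} (hΨ : Φ.Inst Ψ) (hΩ : Ψ.Inst Ω) : Φ.Inst Ω := by
  obtain ⟨σ, -, hyps_Ψ, concl_Ψ, dv_Ψ⟩ := hΨ
  obtain ⟨σ', hσ', hyps_Ω, concl_Ω, dv_Ω⟩ := hΩ
  refine ⟨σ'.comp σ, hσ'.comp dv_Ψ, ?_, ?_, ?_⟩
  · rw [hyps_Ω, hyps_Ψ, Finset.image_image]
    exact Finset.image_congr fun h _ => (MF.substMF_comp σ' σ h).symm
  · rw [concl_Ω, concl_Ψ, MF.substMF_comp]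
  · calc (σ'.comp σ).dvMap Φ.dv ⊆ σ'.dvMap (σ.dvMap Φ.dv) := σ'.dvMap_comp_subset σ Φ.dv
      _ ⊆ σ'.dvMap Ψ.dv := σ'.dvMap_mono dv_Ψ
      _ ⊆ Ω.dv := dv_Ω

theorem IsTrue.of_inst {Φ Ψ : Scheme} (hΦ : Φ.IsTrue) (hΨ : Φ.Inst Ψ) : Ψ.IsTrue := by
  obtain ⟨σ, -, hyps_Ψ, concl_Ψ, dv_Ψ⟩ := hΨ
  intro τ hτ D hD hvalid
  rw [concl_Ψ, ← MF.osubst_comp]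
  refine hΦ (τ.comp σ) (hτ.comp dv_Ψ) D hD fun h hh => ?_
  rw [MF.osubst_comp]
  exact hvalid _ (hyps_Ψ ▸ Finset.mem_image_of_mem _ hh)

theorem Inst.transform {Φ Ψ : Scheme} (hΨ : Φ.Inst Ψ) (hq : Φ.QFree) (i j : ℕ) :
    Φ.Inst (Ψ.transform i j) := by
  obtain ⟨σ, hσ, hyps_Ψ, concl_Ψ, dv_Ψ⟩ := hΨ
  refine ⟨σ.transform i j, hσ.transform i j, ?_, ?_, (σ.dvMap_transform_subset i j _).trans dv_Ψ⟩
  · rw [Scheme.transform, hyps_Ψ, Finset.image_image]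
    exact Finset.image_congr fun h hh => (hq.1 h hh).transform_substMF i j σ
  · rw [Scheme.transform, concl_Ψ, hq.2.transform_substMF]

end Scheme

/-- Every true quantifier-free scheme is supertrue. -/
theorem qfree_true_supertrue (Φ : Scheme) (hq : Φ.QFree) (ht : Φ.IsTrue) :
    Φ.Supertrue := by
  intro Ψ hΨ hpre Θ hΘ i j hij τ hτ D hD _
  obtain ⟨σ, hσ, -, concl_Θ, dv_Θ⟩ : Scheme.Inst ⟨∅, Ψ.concl, Ψ.dv⟩ Θ := by
    rcases hΘ with rfl | hΘ
    exacts [Scheme.inst_self_of_legit hτ, hΘ]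
  -- Restoring the substituted hypotheses of `Ψ` turns `Θ` into an instance of `Φ`.
  let Ω : Scheme := ⟨Ψ.hyps.image (MF.substMF σ), Θ.concl, Θ.dv⟩
  have hΨΩ : Ψ.Inst Ω := ⟨σ, hσ, rfl, concl_Θ, dv_Θ⟩
  have hΦΩ : Φ.Inst Ω := by
    rcases hΨ with rfl | hΨ
    exacts [hΨΩ, hΨ.trans hΨΩ]
  refine ht.of_inst (hΦΩ.transform hq i j) τ hτ D hD ?_
  simp only [Ω, Scheme.transform, Finset.forall_mem_image]
  intro h hh
  have inst_h : Scheme.Inst ⟨∅, h, Ψ.dv⟩ ⟨∅, h.substMF σ, Θ.dv⟩ :=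
    ⟨σ, hσ, rfl, rfl, dv_Θ⟩
  exact hpre h hh _ (Or.inr inst_h) i j hij τ hτ D hD (by simp [Scheme.transform])
end
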